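/- arXiv:1511.07148 — 2 statements merged into one kernel-verified Lean document; each statement's English description precedes it below -/
import Mathlib

section
/- Let k ≥ 1 be an integer, let s be a real number with 1/2 ≤ s ≤ 1, let v : Fin k → Bool be a fixed binary vector, and let S be any finite set of binary vectors u : Fin k → Bool with v ∉ S and |S| ≤ k. Then Σ_{u ∈ S} s^(k - d(u,v))·(1-s)^(d(u,v)) ≤ k·s^(k-1)·(1-s), where d denotes Hamming distance. (Hence NearBucket-LSH's choice of the k buckets at Hamming distance 1 from the exact bucket is optimal among any choice of k additional buckets.) -/
open Finset

section OrderedSemiring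

variable {R : Type*} [Semiring R] [PartialOrder R] [IsOrderedRing R] {a b : R}

lemma antitoneOn_pow_sub_mul_pow (hb : 0 ≤ b) (hba : b ≤ a) (n : ℕ) :
    AntitoneOn (fun d ↦ a ^ (n - d) * b ^ d) (Set.Iic n) := by
  intro d _ e (hen : e ≤ n) hde
  have ha : 0 ≤ a := hb.trans hba
  calc a ^ (n - e) * b ^ e
      = a ^ (n - e) * b ^ (e - d) * b ^ d := by rw [mul_assoc, pow_sub_mul_pow b hde]
    _ ≤ a ^ (n - e) * a ^ (e - d) * b ^ d := by gcongr
    _ = a ^ (n - d) * b ^ d := by rw [← pow_add, tsub_add_tsub_cancel hen hde]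

variable {ι : Type*} [Fintype ι] {β : ι → Type*} [∀ i, DecidableEq (β i)]

lemma pow_sub_hammingDist_mul_pow_le (hb : 0 ≤ b) (hba : b ≤ a) {u v : ∀ i, β i} {r : ℕ}
    (hr : r ≤ hammingDist u v) :
    a ^ (Fintype.card ι - hammingDist u v) * b ^ hammingDist u v ≤
      a ^ (Fintype.card ι - r) * b ^ r :=
  have hcard : hammingDist u v ≤ Fintype.card ι := hammingDist_le_card_fintype
  antitoneOn_pow_sub_mul_pow hb hba _ (hr.trans hcard) hcard hr

theorem near_buckets_optimal_general (hb : 0 ≤ b) (hba : b ≤ a) {v : ∀ i, β i}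
    {S : Finset (∀ i, β i)} {r m : ℕ} (hr : ∀ u ∈ S, r ≤ hammingDist u v) (hS : #S ≤ m) :
    ∑ u ∈ S, a ^ (Fintype.card ι - hammingDist u v) * b ^ hammingDist u v ≤
      m * (a ^ (Fintype.card ι - r) * b ^ r) := by
  have ha : 0 ≤ a := hb.trans hba
  calc ∑ u ∈ S, a ^ (Fintype.card ι - hammingDist u v) * b ^ hammingDist u v
      ≤ #S • (a ^ (Fintype.card ι - r) * b ^ r) :=
        sum_le_card_nsmul _ _ _ fun u hu ↦ pow_sub_hammingDist_mul_pow_le hb hba (hr u hu)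
    _ ≤ m • (a ^ (Fintype.card ι - r) * b ^ r) := by gcongr
    _ = m * (a ^ (Fintype.card ι - r) * b ^ r) := nsmul_eq_mul _ _

end OrderedSemiring

/-- For `k ≥ 1`, `1/2 ≤ s ≤ 1`, a fixed binary vector `v : Fin k → Bool`, and any
finite set `S` of binary vectors with `v ∉ S` and `|S| ≤ k`, the total success
probability `∑_{u ∈ S} s^(k - d(u,v))·(1-s)^(d(u,v))` is at most
`k·s^(k-1)·(1-s)` — searching the `k` buckets at Hamming distance 1 is optimal. -/
theorem near_buckets_optimal (k : ℕ) (hk : 1 ≤ k) (s : ℝ)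
    (hs₁ : 1/2 ≤ s) (hs₂ : s ≤ 1) (v : Fin k → Bool)
    (S : Finset (Fin k → Bool)) (hv : v ∉ S) (hS : S.card ≤ k) :
    ∑ u ∈ S, s ^ (k - hammingDist u v) * (1 - s) ^ (hammingDist u v) ≤
      (k : ℝ) * (s ^ (k - 1) * (1 - s)) := by
  have hr : ∀ u ∈ S, 1 ≤ hammingDist u v := fun u hu ↦
    hammingDist_pos.2 (ne_of_mem_of_not_mem hu hv)
  simpa only [Fintype.card_fin, pow_one] using
    near_buckets_optimal_general (sub_nonneg.2 hs₂) (show 1 - s ≤ s by linarith) hr hS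
end

section
/- Let u and v be nonzero vectors in Euclidean space ℝ^d (d ≥ 2) with angle θ = arccos(⟨u,v⟩/(‖u‖·‖v‖)) between them. If r is distributed according to the uniform (normalized surface) probability measure on the unit sphere of ℝ^d, then the probability of the event { (⟨r, u⟩ > 0) ≠ (⟨r, v⟩ > 0) } equals θ/π. -/
open scoped InnerProductSpace
open MeasureTheory

/-!
Project the random normal orthogonally onto the plane spanned by `u` and `v`, identified with `ℂ`.
Every isometry of the plane extends to the whole space, so the law of the projection is invariant
under rotations, and its argument is therefore uniformly distributed on the circle. The hyperplane
separates `u` from `v` exactly when the argument lies in one but not both of the open half circles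
centred at `arg u` and `arg v`; the symmetric difference of these has length twice the angle
between `u` and `v`, out of `2π`.
Collinear vectors span no plane, but for them separation happens almost never or almost always.
The uniform law on the sphere is reduced to the uniform law on the unit ball, because separation
depends only on the direction of the normal.
-/

section Definitions

variable {E : Type*} [NormedAddCommGroup E] [InnerProductSpace ℝ E]

/-- The normals of the linear hyperplanes that separate `u` from `v`, where a vector lying on the
hyperplane itself is counted on the negative side. -/
def separatingNormals (u v : E) : Set E :=
  {x | ¬(0 < ⟪x, u⟫_ℝ ↔ 0 < ⟪x, v⟫_ℝ)}

lemma measurableSet_separatingNormals [MeasurableSpace E] [BorelSpace E] (u v : E) :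
    MeasurableSet (separatingNormals u v) := by
  have hmeas (w : E) : MeasurableSet {x : E | 0 < ⟪x, w⟫_ℝ} :=
    (isOpen_lt continuous_const (by fun_prop)).measurableSet
  exact ((hmeas u).iff (hmeas v)).compl

lemma smul_mem_separatingNormals {u v x : E} (hx : x ∈ separatingNormals u v) {c : ℝ}
    (hc : 0 < c) : c • x ∈ separatingNormals u v := by
  simpa only [separatingNormals, Set.mem_ofPred_eq, real_inner_smul_left,
    mul_pos_iff_of_pos_left hc] using hx

lemma zero_notMem_separatingNormals (u v : E) : 0 ∉ separatingNormals u v := by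
  simp [separatingNormals]

/-- A measure on an inner product space is isotropic if it is invariant under the whole orthogonal
group, reflections included. -/
def IsIsotropic [MeasurableSpace E] (μ : Measure E) : Prop :=
  ∀ φ : E ≃ₗᵢ[ℝ] E, MeasurePreserving φ μ μ

end Definitions

section HalfCircles

open Real
open scoped symmDiff

lemma cos_pos_iff_abs_lt_pi_div_two {t : ℝ} (ht : |t| ≤ 3 * π / 2) :
    0 < cos t ↔ |t| < π / 2 := by
  refine ⟨fun hcos => ?_, fun hlt => cos_pos_of_mem_Ioo (abs_lt.1 hlt)⟩
  by_contra! hge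
  rw [← cos_abs] at hcos
  exact hcos.not_ge (cos_nonpos_of_pi_div_two_le_of_le hge (by linarith))

lemma volume_Ioo_symmDiff_Ioo {a b c d : ℝ} (hac : a ≤ c) (hcb : c ≤ b) (hbd : b ≤ d) :
    volume (Set.Ioo a b ∆ Set.Ioo c d) = ENNReal.ofReal ((c - a) + (d - b)) := by
  have hinter : volume.real (Set.Ioo a b ∩ Set.Ioo c d) = b - c := by
    rw [Set.Ioo_inter_Ioo, sup_of_le_right hac, inf_of_le_left hbd, volume_real_Ioo_of_le hcb]
  have hleft := measureReal_inter_add_sdiff (μ := volume) (s := Set.Ioo a b)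
    (measurableSet_Ioo (a := c) (b := d)) measure_Ioo_lt_top.ne
  have hright := measureReal_inter_add_sdiff (μ := volume) (s := Set.Ioo c d)
    (measurableSet_Ioo (a := a) (b := b)) measure_Ioo_lt_top.ne
  have hsymm := measureReal_symmDiff_eq (μ := volume)
    (measurableSet_Ioo (a := a) (b := b)) (measurableSet_Ioo (a := c) (b := d))
    measure_Ioo_lt_top.ne measure_Ioo_lt_top.ne
  rw [hinter, volume_real_Ioo_of_le (hac.trans hcb)] at hleft
  rw [Set.inter_comm, hinter, volume_real_Ioo_of_le (hcb.trans hbd)] at hright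
  rw [← ofReal_measureReal (measure_symmDiff_ne_top measure_Ioo_lt_top.ne measure_Ioo_lt_top.ne)]
  congr 1
  linarith

lemma setOf_not_cos_pos_iff_cos_sub_pos_inter_Ioc {θ : ℝ} (h0 : 0 ≤ θ) (hπ : θ ≤ π) :
    {t | ¬(0 < cos t ↔ 0 < cos (t - θ))} ∩ Set.Ioc (-(π / 2)) (-(π / 2) + 2 * π) =
      Set.Ioo (-(π / 2)) (π / 2) ∆ Set.Ioo (θ - π / 2) (θ + π / 2) := by
  ext t
  have hcos (ht : t ∈ Set.Ioc (-(π / 2)) (-(π / 2) + 2 * π)) :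
      (0 < cos t ↔ t ∈ Set.Ioo (-(π / 2)) (π / 2)) ∧
        (0 < cos (t - θ) ↔ t ∈ Set.Ioo (θ - π / 2) (θ + π / 2)) := by
    obtain ⟨hl, hr⟩ := ht
    rw [cos_pos_iff_abs_lt_pi_div_two (abs_le.2 ⟨by linarith, by linarith⟩),
      cos_pos_iff_abs_lt_pi_div_two (abs_le.2 ⟨by linarith, by linarith⟩), abs_lt, abs_lt]
    constructor <;> constructor <;> rintro ⟨h1, h2⟩ <;> constructor <;> linarith
  have hwindow : t ∈ Set.Ioo (-(π / 2)) (π / 2) ∨ t ∈ Set.Ioo (θ - π / 2) (θ + π / 2) →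
      t ∈ Set.Ioc (-(π / 2)) (-(π / 2) + 2 * π) := by
    rintro (⟨h1, h2⟩ | ⟨h1, h2⟩) <;> constructor <;> linarith
  rw [Set.mem_inter_iff, Set.mem_symmDiff, Set.mem_ofPred_eq]
  tauto

end HalfCircles

section UniformArgument

open Real InnerProductGeometry

local instance : Fact (0 < 2 * π) := ⟨two_pi_pos⟩

/-- Angles carry the Haar measure of total mass `2 * π`. -/
noncomputable local instance : MeasureSpace Angle :=
  inferInstanceAs (MeasureSpace (AddCircle (2 * π)))

local instance : BorelSpace Angle := inferInstanceAs (BorelSpace (AddCircle (2 * π)))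

local instance : CompactSpace Angle := inferInstanceAs (CompactSpace (AddCircle (2 * π)))

local instance : SecondCountableTopology Angle :=
  inferInstanceAs (SecondCountableTopology (AddCircle (2 * π)))

local instance : (volume : Measure Angle).IsAddHaarMeasure :=
  inferInstanceAs (volume : Measure (AddCircle (2 * π))).IsAddHaarMeasure

lemma measurableSet_not_cos_sub_pos_iff_cos_sub_pos (α β : Angle) :
    MeasurableSet {γ : Angle | ¬(0 < (γ - α).cos ↔ 0 < (γ - β).cos)} := by
  have hmeas (δ : Angle) : MeasurableSet {γ : Angle | 0 < (γ - δ).cos} :=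
    (isOpen_lt continuous_const
      (Angle.continuous_cos.comp (continuous_sub_right δ))).measurableSet
  exact ((hmeas α).iff (hmeas β)).compl

lemma volume_not_cos_pos_iff_cos_sub_pos {θ : ℝ} (h0 : 0 ≤ θ) (hπ : θ ≤ π) :
    volume {γ : Angle | ¬(0 < γ.cos ↔ 0 < (γ - θ).cos)} = ENNReal.ofReal (2 * θ) := by
  have hmeas := measurableSet_not_cos_sub_pos_iff_cos_sub_pos 0 θ
  simp only [sub_zero] at hmeas
  calc
    _ = volume ({t | ¬(0 < cos t ↔ 0 < cos (t - θ))} ∩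
          Set.Ioc (-(π / 2)) (-(π / 2) + 2 * π)) :=
      AddCircle.add_projection_respects_measure (2 * π) _ hmeas
    _ = ENNReal.ofReal (2 * θ) := by
      rw [setOf_not_cos_pos_iff_cos_sub_pos_inter_Ioc h0 hπ,
        volume_Ioo_symmDiff_Ioo (by linarith) (by linarith) (by linarith)]
      congr 1
      ring

lemma volume_not_cos_sub_pos_iff_cos_sub_pos (α β : Angle) :
    volume {γ : Angle | ¬(0 < (γ - α).cos ↔ 0 < (γ - β).cos)} =
      ENNReal.ofReal (2 * |(α - β).toReal|) := by
  wlog hδ : 0 ≤ (β - α).toReal generalizing α β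
  · have hne : β - α ≠ π := fun h => hδ (by rw [h, Angle.toReal_pi]; exact pi_pos.le)
    have hδ' : 0 ≤ (α - β).toReal := by
      rw [← neg_sub, Angle.toReal_neg_eq_neg_toReal_iff.2 hne]
      linarith
    rw [← neg_sub, Angle.abs_toReal_neg, ← this β α hδ']
    simp only [iff_comm]
  calc
    _ = volume ((fun γ => γ + -α) ⁻¹' {γ : Angle | ¬(0 < γ.cos ↔ 0 < (γ - (β - α)).cos)}) := by
      simp only [Set.preimage_ofPred_eq, ← sub_eq_add_neg, sub_sub_sub_cancel_right]
    _ = volume {γ : Angle | ¬(0 < γ.cos ↔ 0 < (γ - ((β - α).toReal : Angle)).cos)} := by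
      rw [measure_preimage_add_right, Angle.coe_toReal]
    _ = _ := by
      rw [volume_not_cos_pos_iff_cos_sub_pos hδ (Angle.toReal_le_pi _), ← neg_sub β α,
        Angle.abs_toReal_neg, abs_of_nonneg hδ]

lemma measurable_coe_arg : Measurable fun z : ℂ => (z.arg : Angle) :=
  Angle.continuous_coe.measurable.comp Complex.measurable_arg

variable {ν : Measure ℂ}

lemma isAddLeftInvariant_map_arg (hν : ∀ w : Circle, MeasurePreserving (rotation w) ν ν)
    (h0 : ν {0} = 0) : (ν.map fun z => (z.arg : Angle)).IsAddLeftInvariant := by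
  refine ⟨fun α => ?_⟩
  have hrot : ((fun γ => α + γ) ∘ fun z : ℂ => (z.arg : Angle)) =ᵐ[ν]
      (fun z => (z.arg : Angle)) ∘ rotation α.toCircle := by
    filter_upwards [compl_mem_ae_iff.2 h0] with z hz
    rw [Function.comp_apply, Function.comp_apply, rotation_apply,
      Complex.arg_mul_coe_angle (Circle.coe_ne_zero _) hz, Angle.arg_toCircle]
  rw [Measure.map_map (measurable_const_add α) measurable_coe_arg, Measure.map_congr hrot,
    ← Measure.map_map measurable_coe_arg (hν _).measurable, (hν _).map_eq]

variable [IsFiniteMeasure ν]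

lemma map_arg_eq_smul_volume (hν : ∀ w : Circle, MeasurePreserving (rotation w) ν ν)
    (h0 : ν {0} = 0) :
    (ν.map fun z => (z.arg : Angle)) = (ν Set.univ / ENNReal.ofReal (2 * π)) • volume := by
  have := isAddLeftInvariant_map_arg hν h0
  obtain ⟨c, hc⟩ : ∃ c : NNReal, (ν.map fun z => (z.arg : Angle)) = (c : ENNReal) • volume :=
    ⟨_, Measure.isAddLeftInvariant_eq_smul _ _⟩
  have hvol : volume (Set.univ : Set Angle) = ENNReal.ofReal (2 * π) :=
    AddCircle.measure_univ (2 * π)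
  have hmass : ν Set.univ = c * ENNReal.ofReal (2 * π) := by
    rw [← hvol, ← smul_eq_mul, ← Measure.smul_apply, ← hc,
      Measure.map_apply measurable_coe_arg MeasurableSet.univ, Set.preimage_univ]
  rw [hc, hmass, ENNReal.mul_div_cancel_right
    (ENNReal.ofReal_pos.2 two_pi_pos).ne' ENNReal.ofReal_ne_top]

lemma inner_eq_norm_mul_norm_mul_cos_arg_sub_arg (z w : ℂ) :
    ⟪z, w⟫_ℝ = ‖z‖ * ‖w‖ * cos (z.arg - w.arg) := by
  rw [Complex.inner, Complex.mul_re, Complex.conj_re, Complex.conj_im, cos_sub,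
    ← Complex.norm_mul_cos_arg z, ← Complex.norm_mul_sin_arg z,
    ← Complex.norm_mul_cos_arg w, ← Complex.norm_mul_sin_arg w]
  ring

lemma inner_pos_iff_cos_arg_sub_arg_pos {z w : ℂ} (hz : z ≠ 0) (hw : w ≠ 0) :
    0 < ⟪z, w⟫_ℝ ↔ 0 < ((z.arg : Angle) - w.arg).cos := by
  rw [inner_eq_norm_mul_norm_mul_cos_arg_sub_arg, ← Angle.coe_sub, Angle.cos_coe,
    mul_pos_iff_of_pos_left (mul_pos (norm_pos_iff.2 hz) (norm_pos_iff.2 hw))]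

lemma measure_separatingNormals_complex
    (hν : ∀ w : Circle, MeasurePreserving (rotation w) ν ν) (h0 : ν {0} = 0)
    {a b : ℂ} (ha : a ≠ 0) (hb : b ≠ 0) :
    ν (separatingNormals a b) = ENNReal.ofReal (angle a b / π) * ν Set.univ := by
  have hangle : |((a.arg : Angle) - b.arg).toReal| = angle a b := by
    rw [← Complex.arg_div_coe_angle ha hb, Complex.arg_coe_angle_toReal_eq_arg,
      Complex.angle_eq_abs_arg ha hb]
  calc
    _ = ν ((fun z : ℂ => (z.arg : Angle)) ⁻¹'
          {γ | ¬(0 < (γ - a.arg).cos ↔ 0 < (γ - b.arg).cos)}) := by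
      refine measure_congr ?_
      filter_upwards [compl_mem_ae_iff.2 h0] with z hz
      exact propext (not_congr (iff_congr (inner_pos_iff_cos_arg_sub_arg_pos hz ha)
        (inner_pos_iff_cos_arg_sub_arg_pos hz hb)))
    _ = ν Set.univ / ENNReal.ofReal (2 * π) * ENNReal.ofReal (2 * angle a b) := by
      rw [← Measure.map_apply measurable_coe_arg
          (measurableSet_not_cos_sub_pos_iff_cos_sub_pos _ _),
        map_arg_eq_smul_volume hν h0, Measure.smul_apply, smul_eq_mul,
        volume_not_cos_sub_pos_iff_cos_sub_pos, hangle]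
    _ = _ := by
      rw [← ENNReal.mul_div_right_comm, mul_comm, ENNReal.mul_div_right_comm,
        ← ENNReal.ofReal_div_of_pos two_pi_pos, mul_div_mul_left _ _ two_ne_zero]

end UniformArgument

section Isometries

lemma exists_linearIsometryEquiv_forall_apply_eq {𝕜 E F : Type*} [RCLike 𝕜]
    [NormedAddCommGroup E] [InnerProductSpace 𝕜 E] [FiniteDimensional 𝕜 E]
    [NormedAddCommGroup F] [InnerProductSpace 𝕜 F] (L M : F →ₗᵢ[𝕜] E) :
    ∃ φ : E ≃ₗᵢ[𝕜] E, ∀ x, φ (L x) = M x := by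
  let K := M.comp L.equivRange.symm.toLinearIsometry
  refine ⟨K.extend.toLinearIsometryEquiv rfl, fun x => ?_⟩
  simpa [K] using K.extend_apply (L.equivRange x)

lemma exists_linearIsometry_complex {E : Type*} [NormedAddCommGroup E] [InnerProductSpace ℝ E]
    {u v : E} (huv : LinearIndependent ℝ ![u, v]) :
    ∃ (L : ℂ →ₗᵢ[ℝ] E) (a b : ℂ), L a = u ∧ L b = v := by
  let P := Submodule.span ℝ (Set.range ![u, v])
  have : FiniteDimensional ℝ P := FiniteDimensional.span_of_finite ℝ (Set.finite_range _)
  have hP : Module.finrank ℝ P = 2 := by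
    simpa only [Fintype.card_fin] using finrank_span_eq_card huv
  let φ : ℂ ≃ₗᵢ[ℝ] P :=
    Complex.isometryOfOrthonormal ((stdOrthonormalBasis ℝ P).reindex (finCongr hP))
  have hu : u ∈ P := Submodule.subset_span ⟨0, rfl⟩
  have hv : v ∈ P := Submodule.subset_span ⟨1, rfl⟩
  exact ⟨P.subtypeₗᵢ.comp φ.toLinearIsometry, φ.symm ⟨u, hu⟩, φ.symm ⟨v, hv⟩, by simp, by simp⟩

end Isometries

section Isotropic

open Real InnerProductGeometry
open ContinuousLinearMap (adjoint adjoint_inner_left)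

variable {E F : Type*} [NormedAddCommGroup E] [InnerProductSpace ℝ E]
  [NormedAddCommGroup F] [InnerProductSpace ℝ F]

lemma preimage_adjoint_separatingNormals [CompleteSpace E] [CompleteSpace F] (L : F →L[ℝ] E)
    (a b : F) : adjoint L ⁻¹' separatingNormals a b = separatingNormals (L a) (L b) := by
  simp only [separatingNormals, Set.preimage_ofPred_eq, adjoint_inner_left]

variable [MeasurableSpace E] {μ : Measure E} {u v : E}

lemma measure_separatingNormals_smul_right (hu : u ≠ 0) (hnull : μ (ℝ ∙ u)ᗮ = 0) {c : ℝ}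
    (hc : c ≠ 0) :
    μ (separatingNormals u (c • u)) = ENNReal.ofReal (angle u (c • u) / π) * μ Set.univ := by
  rcases hc.lt_or_gt with hneg | hpos
  · have hae : separatingNormals u (c • u) =ᵐ[μ] Set.univ := by
      filter_upwards [compl_mem_ae_iff.2 hnull] with x hx
      have hxu : ⟪x, u⟫_ℝ ≠ 0 := mt Submodule.mem_orthogonal_singleton_iff_inner_left.2 hx
      refine eq_true (show ¬(0 < ⟪x, u⟫_ℝ ↔ 0 < ⟪x, c • u⟫_ℝ) from ?_)
      have hflip : 0 < c * ⟪x, u⟫_ℝ ↔ ⟪x, u⟫_ℝ < 0 := by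
        simp [mul_pos_iff, hneg, hneg.not_gt]
      rw [real_inner_smul_right, hflip]
      grind
    rw [measure_congr hae, angle_smul_right_of_neg u u hneg, angle_self_neg_of_nonzero hu,
      div_self pi_ne_zero, ENNReal.ofReal_one, one_mul]
  · have hempty : separatingNormals u (c • u) = ∅ := by
      simp [separatingNormals, real_inner_smul_right, mul_pos_iff_of_pos_left hpos]
    rw [hempty, measure_empty, angle_smul_right_of_pos u u hpos, angle_self hu, zero_div,
      ENNReal.ofReal_zero, zero_mul]

variable [BorelSpace E] [FiniteDimensional ℝ E]

lemma isIsotropic_restrict_ball (r : ℝ) :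
    IsIsotropic ((volume : Measure E).restrict (Metric.ball 0 r)) := by
  intro φ
  simpa only [φ.preimage_ball, map_zero] using
    φ.measurePreserving.restrict_preimage (measurableSet_ball (x := (0 : E)) (ε := r))

lemma IsIsotropic.map_adjoint [CompleteSpace F] [MeasurableSpace F] [BorelSpace F]
    (hμ : IsIsotropic μ) (L : F →ₗᵢ[ℝ] E) :
    IsIsotropic (μ.map (adjoint L.toContinuousLinearMap)) := by
  intro ρ
  let P := adjoint L.toContinuousLinearMap
  obtain ⟨φ, hφ⟩ : ∃ φ : E ≃ₗᵢ[ℝ] E, ∀ y, φ (L y) = L (ρ y) :=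
    exists_linearIsometryEquiv_forall_apply_eq L (L.comp ρ.toLinearIsometry)
  have hcomm : ρ ∘ P = P ∘ φ := by
    funext x
    refine ext_inner_right ℝ fun y => ?_
    calc
      ⟪ρ (P x), y⟫_ℝ = ⟪x, L (ρ.symm y)⟫_ℝ := by
        rw [ρ.inner_map_eq_flip, adjoint_inner_left, LinearIsometry.coe_toContinuousLinearMap]
      _ = ⟪φ x, L y⟫_ℝ := by
        rw [← φ.inner_map_map, hφ, ρ.apply_symm_apply]
      _ = ⟪P (φ x), y⟫_ℝ :=
        (adjoint_inner_left L.toContinuousLinearMap y (φ x)).symm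
  have hρ : Measurable ρ := ρ.continuous.measurable
  have hP : Measurable P := P.continuous.measurable
  refine ⟨hρ, ?_⟩
  rw [Measure.map_map hρ hP, hcomm, ← Measure.map_map hP (hμ φ).measurable, (hμ φ).map_eq]

variable [IsFiniteMeasure μ]

lemma IsIsotropic.measure_separatingNormals_of_linearIndependent (hμ : IsIsotropic μ)
    (hnull : μ (ℝ ∙ u)ᗮ = 0) (huv : LinearIndependent ℝ ![u, v]) :
    μ (separatingNormals u v) = ENNReal.ofReal (angle u v / π) * μ Set.univ := by
  obtain ⟨L, a, b, rfl, rfl⟩ := exists_linearIsometry_complex huv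
  have ha : a ≠ 0 := by
    rintro rfl
    exact huv.ne_zero 0 (map_zero L)
  have hb : b ≠ 0 := by
    rintro rfl
    exact huv.ne_zero 1 (map_zero L)
  let P := adjoint L.toContinuousLinearMap
  have hP : Measurable P := P.continuous.measurable
  have h0 : μ.map P {0} = 0 := by
    rw [Measure.map_apply hP (measurableSet_singleton 0)]
    refine measure_mono_null (fun x (hx : P x = 0) => ?_) hnull
    refine Submodule.mem_orthogonal_singleton_iff_inner_left.2 ?_
    rw [← L.coe_toContinuousLinearMap, ← adjoint_inner_left, hx, inner_zero_left]
  have hplane := measure_separatingNormals_complex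
    (fun w => hμ.map_adjoint L (rotation w)) h0 ha hb
  rwa [Measure.map_apply hP (measurableSet_separatingNormals a b),
    Measure.map_apply hP MeasurableSet.univ, Set.preimage_univ,
    preimage_adjoint_separatingNormals, ← L.angle_map] at hplane

theorem IsIsotropic.measure_separatingNormals (hμ : IsIsotropic μ) (hu : u ≠ 0) (hv : v ≠ 0)
    (hnull : μ (ℝ ∙ u)ᗮ = 0) :
    μ (separatingNormals u v) = ENNReal.ofReal (angle u v / π) * μ Set.univ := by
  by_cases huv : LinearIndependent ℝ ![u, v]
  · exact hμ.measure_separatingNormals_of_linearIndependent hnull huv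
  · rw [LinearIndependent.pair_iff' hu] at huv
    push Not at huv
    obtain ⟨c, rfl⟩ := huv
    exact measure_separatingNormals_smul_right hu hnull (left_ne_zero_of_smul hv)

end Isotropic

section Cones

open Metric
open scoped Pointwise

variable {E : Type*} [NormedAddCommGroup E] [NormedSpace ℝ E] {S : Set E}

lemma Ioo_smul_image_preimage_sphere (hS : ∀ x ∈ S, ∀ c : ℝ, 0 < c → c • x ∈ S) (h0 : 0 ∉ S) :
    Set.Ioo (0 : ℝ) 1 • ((↑) '' ((↑) ⁻¹' S : Set (sphere (0 : E) 1)) : Set E) =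
      S ∩ ball 0 1 := by
  ext x
  constructor
  · rintro ⟨c, ⟨hc0, hc1⟩, _, ⟨r, hr, rfl⟩, rfl⟩
    refine ⟨hS r hr c hc0, ?_⟩
    simpa [norm_smul, abs_of_pos hc0] using hc1
  · rintro ⟨hx, hx1⟩
    have hx0 : x ≠ 0 := ne_of_mem_of_not_mem hx h0
    have hpos : 0 < ‖x‖ := norm_pos_iff.2 hx0
    have hunit : ‖x‖⁻¹ • x ∈ sphere (0 : E) 1 :=
      mem_sphere_zero_iff_norm.2 (norm_smul_inv_norm hx0)
    exact ⟨‖x‖, ⟨hpos, mem_ball_zero_iff.1 hx1⟩, ‖x‖⁻¹ • x,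
      ⟨⟨_, hunit⟩, hS x hx _ (inv_pos.2 hpos), rfl⟩, smul_inv_smul₀ hpos.ne' x⟩

lemma inv_toSphere_univ_smul_toSphere_preimage [MeasurableSpace E] [BorelSpace E]
    [FiniteDimensional ℝ E] [Nontrivial E] (μ : Measure E) [μ.IsAddHaarMeasure]
    (hmeas : MeasurableSet S) (hS : ∀ x ∈ S, ∀ c : ℝ, 0 < c → c • x ∈ S) (h0 : 0 ∉ S) :
    ((μ.toSphere Set.univ)⁻¹ • μ.toSphere) ((↑) ⁻¹' S) = μ (S ∩ ball 0 1) / μ (ball 0 1) := by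
  rw [Measure.smul_apply, smul_eq_mul, Measure.toSphere_apply' _ (measurable_subtype_coe hmeas),
    Ioo_smul_image_preimage_sphere hS h0, Measure.toSphere_apply_univ, mul_comm,
    ← div_eq_mul_inv, ENNReal.mul_div_mul_left _ _ (Nat.cast_ne_zero.2 Module.finrank_pos.ne')
      (ENNReal.natCast_ne_top _)]

end Cones

theorem random_hyperplane_separation_sphere_general {E : Type*} [NormedAddCommGroup E]
    [InnerProductSpace ℝ E] [FiniteDimensional ℝ E] [MeasurableSpace E] [BorelSpace E] {u v : E}
    (hu : u ≠ 0) (hv : v ≠ 0) :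
    (((volume : Measure E).toSphere Set.univ)⁻¹ • (volume : Measure E).toSphere)
      {r : Metric.sphere (0 : E) 1 | ¬(0 < ⟪(r : E), u⟫_ℝ ↔ 0 < ⟪(r : E), v⟫_ℝ)} =
      ENNReal.ofReal (InnerProductGeometry.angle u v / Real.pi) := by
  have : Nontrivial E := ⟨u, 0, hu⟩
  let B := Metric.ball (0 : E) 1
  have hmeas := measurableSet_separatingNormals u v
  have : IsFiniteMeasure (volume.restrict B) :=
    isFiniteMeasure_restrict.2 measure_ball_lt_top.ne
  have hnull : volume.restrict B ((ℝ ∙ u)ᗮ : Set E) = 0 := by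
    refine Measure.restrict_le_self.absolutelyContinuous (Measure.addHaar_submodule _ _ ?_)
    rwa [Ne, Submodule.orthogonal_eq_top_iff, Submodule.span_singleton_eq_bot]
  have hball : volume (separatingNormals u v ∩ B) =
      ENNReal.ofReal (InnerProductGeometry.angle u v / Real.pi) * volume B := by
    simpa only [Measure.restrict_apply hmeas, Measure.restrict_apply_univ] using
      (isIsotropic_restrict_ball 1).measure_separatingNormals hu hv hnull
  calc
    _ = volume (separatingNormals u v ∩ B) / volume B :=
      inv_toSphere_univ_smul_toSphere_preimage volume hmeas
        (fun _ hx _ => smul_mem_separatingNormals hx) (zero_notMem_separatingNormals u v)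
    _ = _ := by
      rw [hball, ENNReal.mul_div_cancel_right (Metric.measure_ball_pos _ _ one_pos).ne'
        measure_ball_lt_top.ne]

/-- For nonzero `u, v` in `ℝ^d` (`d ≥ 2`) at angle `θ = arccos(⟪u,v⟫/(‖u‖·‖v‖))`,
if `r` is distributed according to the uniform (normalized surface) probability
measure on the unit sphere of `ℝ^d`, then the probability that the hyperplane
with normal `r` separates `u` and `v`, i.e. of `{(⟪r,u⟫ > 0) ≠ (⟪r,v⟫ > 0)}`,
equals `θ/π`. -/
theorem random_hyperplane_separation_sphere (d : ℕ) (hd : 2 ≤ d)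
    (u v : EuclideanSpace ℝ (Fin d)) (hu : u ≠ 0) (hv : v ≠ 0) (θ : ℝ)
    (hθ : θ = Real.arccos (⟪u, v⟫_ℝ / (‖u‖ * ‖v‖))) :
    (((volume : Measure (EuclideanSpace ℝ (Fin d))).toSphere Set.univ)⁻¹ •
        (volume : Measure (EuclideanSpace ℝ (Fin d))).toSphere)
      {r : Metric.sphere (0 : EuclideanSpace ℝ (Fin d)) 1 |
        ¬((0 : ℝ) < ⟪(r : EuclideanSpace ℝ (Fin d)), u⟫_ℝ ↔
          (0 : ℝ) < ⟪(r : EuclideanSpace ℝ (Fin d)), v⟫_ℝ)} =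
      ENNReal.ofReal (θ / Real.pi) :=
  hθ ▸ random_hyperplane_separation_sphere_general hu hv
end
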